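/- Let k be a field, C a small category, M : C → Vec_k a pointwise finite-dimensional persistence module, and θ an endomorphism of M. Then M decomposes as a direct sum of submodules M = M' ⊕ M'', where for each object x of C one has M'_x = Im(θ_x^n) and M''_x = Ker(θ_x^n) for all sufficiently large n; moreover θ restricts to an automorphism of M' and to an endomorphism of M'' which is nilpotent at every object. -/

import Mathlib

namespace PModCat

open CategoryTheory

variable (k : Type) [Field k]

/-- A persistence module over a small category `C`: a functor from `C` to
`k`-vector spaces, given explicitly. -/
structure PersistenceModule (C : Type) [Category C] where
  V : C → Type
  [addCommGroup : ∀ x, AddCommGroup (V x)]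
  [module : ∀ x, Module k (V x)]
  map : ∀ {x y : C}, (x ⟶ y) → (V x →ₗ[k] V y)
  map_id : ∀ x : C, map (𝟙 x) = LinearMap.id
  map_comp : ∀ {x y z : C} (f : x ⟶ y) (g : y ⟶ z),
      map (f ≫ g) = (map g).comp (map f)

attribute [instance] PersistenceModule.addCommGroup PersistenceModule.module

variable {k}

/-- A morphism of persistence modules (a natural transformation). -/
structure Hom {C : Type} [Category C] (M N : PersistenceModule k C) where
  app : ∀ x, M.V x →ₗ[k] N.V x
  natural : ∀ {x y : C} (f : x ⟶ y), (N.map f).comp (app x) = (app y).comp (M.map f)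

/-- A morphism of persistence modules is an isomorphism iff it is pointwise bijective. -/
def IsIsoHom {C : Type} [Category C] {M N : PersistenceModule k C} (f : Hom M N) : Prop :=
  ∀ x, Function.Bijective (f.app x)

/-- Two persistence modules are isomorphic if there is a pointwise bijective
morphism between them. -/
def Isomorphic {C : Type} [Category C] (M N : PersistenceModule k C) : Prop :=
  ∃ f : Hom M N, IsIsoHom f

/-- The endomorphism `1 - θ` of `M`, for an endomorphism `θ` of `M`. -/
def oneSub {C : Type} [Category C] {M : PersistenceModule k C} (θ : Hom M M) : Hom M M where
  app x := LinearMap.id - θ.app x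
  natural {x y} f := by
    rw [LinearMap.comp_sub, LinearMap.sub_comp, θ.natural f, LinearMap.comp_id,
      LinearMap.id_comp]

/-- The direct sum of a family of persistence modules, taken pointwise
(`Π₀` is the finitely supported product, i.e. the direct sum). -/
noncomputable def directSum {C : Type} [Category C] {ι : Type}
    (N : ι → PersistenceModule k C) : PersistenceModule k C where
  V x := Π₀ i, (N i).V x
  map {x y} f := DFinsupp.mapRange.linearMap (fun i => (N i).map f)
  map_id x := by
    have h : (fun i => (N i).map (𝟙 x)) =
        fun i => (LinearMap.id : (N i).V x →ₗ[k] (N i).V x) :=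
      funext fun i => (N i).map_id x
    rw [h]
    exact DFinsupp.mapRange.linearMap_id
  map_comp {x y z} f g := by
    have h : (fun i => (N i).map (f ≫ g)) =
        fun i => ((N i).map g).comp ((N i).map f) :=
      funext fun i => (N i).map_comp f g
    rw [h]
    exact DFinsupp.mapRange.linearMap_comp _ _

/-- The binary direct sum of two persistence modules, taken pointwise. -/
def sum2 {C : Type} [Category C] (M N : PersistenceModule k C) : PersistenceModule k C where
  V x := M.V x × N.V x
  map f := (M.map f).prodMap (N.map f)
  map_id x := by
    rw [M.map_id, N.map_id]
    exact LinearMap.prodMap_id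
  map_comp f g := by
    rw [M.map_comp f g, N.map_comp f g]
    exact (LinearMap.prodMap_comp _ _ _ _).symm

/-- The zero persistence module predicate. -/
def IsZero {C : Type} [Category C] (M : PersistenceModule k C) : Prop :=
  ∀ x, ∀ v : M.V x, v = 0

/-- A persistence module is indecomposable if it is nonzero and whenever it is
isomorphic to a direct sum of two modules, one of the summands is zero. -/
def Indecomposable {C : Type} [Category C] (M : PersistenceModule k C) : Prop :=
  ¬ IsZero M ∧ ∀ M' M'' : PersistenceModule k C,
    Isomorphic M (sum2 M' M'') → IsZero M' ∨ IsZero M''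

end PModCat

/-!
At each object this is Fitting's lemma: the ranges of the powers of `θ_x` decrease and their kernels
increase, both chains stabilise, and the stable values are complementary. The exponent at which they
stabilise depends on `x`, so the summands are defined without it, as `⨅ n, Im (θ_x ^ n)` and
`⨆ n, Ker (θ_x ^ n)`. By naturality the structure maps intertwine the powers of `θ`, and therefore
preserve both.
-/

namespace PModCat

open CategoryTheory Filter LinearMap

section Endomorphism

variable {R M N : Type*} [Semiring R] [AddCommMonoid M] [Module R M] [AddCommMonoid N] [Module R N]

theorem map_iInf_range_pow_le {f : Module.End R M} {f' : Module.End R N} {g : M →ₗ[R] N}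
    (h : f' ∘ₗ g = g ∘ₗ f) : (⨅ n, range (f ^ n)).map g ≤ ⨅ n, range (f' ^ n) :=
  le_iInf fun n ↦ calc
    (⨅ m, range (f ^ m)).map g ≤ (range (f ^ n)).map g := Submodule.map_mono (iInf_le _ n)
    _ = range ((f' ^ n).comp g) := by
      rw [← range_comp, Module.End.commute_pow_left_of_commute h]
    _ ≤ range (f' ^ n) := range_comp_le_range g (f' ^ n)

theorem map_iSup_ker_pow_le {f : Module.End R M} {f' : Module.End R N} {g : M →ₗ[R] N}
    (h : f' ∘ₗ g = g ∘ₗ f) : (⨆ n, ker (f ^ n)).map g ≤ ⨆ n, ker (f' ^ n) := by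
  rw [Submodule.map_iSup]
  refine iSup_mono fun n ↦ Submodule.map_le_iff_le_comap.mpr ?_
  calc
    ker (f ^ n) ≤ ker (g ∘ₗ f ^ n) := ker_le_ker_comp (f ^ n) g
    _ = (ker (f' ^ n)).comap g := by
      rw [← Module.End.commute_pow_left_of_commute h, ker_comp]

theorem map_iInf_range_pow_eq_self [IsArtinian R M] (f : Module.End R M) :
    (⨅ n, range (f ^ n)).map f = ⨅ n, range (f ^ n) := by
  obtain ⟨n, hn, hn_succ⟩ := (f.eventually_iInf_range_pow_eq.and
    ((tendsto_add_atTop_nat 1).eventually f.eventually_iInf_range_pow_eq)).exists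
  calc
    (⨅ m, range (f ^ m)).map f = (range (f ^ n)).map f := by rw [hn]
    _ = range (f ^ (n + 1)) := by rw [pow_succ', Module.End.mul_eq_comp, range_comp]
    _ = ⨅ m, range (f ^ m) := hn_succ.symm

theorem disjoint_iInf_range_pow_ker [IsNoetherian R M] (f : Module.End R M) :
    Disjoint (⨅ n, range (f ^ n)) (ker f) := by
  obtain ⟨n, hn, n_pos⟩ :=
    (f.eventually_disjoint_ker_pow_range_pow.and (eventually_ge_atTop 1)).exists
  have ker_le : ker f ≤ ker (f ^ n) := by
    simpa only [iterateKer_coe, pow_one] using f.iterateKer.monotone n_pos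
  exact hn.symm.mono (iInf_le _ n) ker_le

end Endomorphism

variable {k : Type} [Field k] {C : Type} [Category C] {M : PersistenceModule k C}

/-- A submodule of a persistence module: a subspace at each object, preserved by the structure
maps. It bundles each summand of the Fitting decomposition with its invariance. -/
structure PersistenceSubmodule (M : PersistenceModule k C) where
  carrier : ∀ x, Submodule k (M.V x)
  map_le : ∀ {x y : C} (f : x ⟶ y), (carrier x).map (M.map f) ≤ carrier y

namespace Hom

/-- The eventual image of an endomorphism `θ`: the submodule `M'` of the Fitting decomposition,
on which `θ` is invertible, encoded as the intersection of the images of all powers. -/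
def eventualRange (θ : Hom M M) : PersistenceSubmodule M where
  carrier x := ⨅ n, range (θ.app x ^ n)
  map_le f := map_iInf_range_pow_le (θ.natural f).symm

/-- The eventual kernel of an endomorphism `θ`: the submodule `M''` of the Fitting decomposition,
on which `θ` is pointwise nilpotent, encoded as the supremum of the kernels of all powers. -/
def eventualKer (θ : Hom M M) : PersistenceSubmodule M where
  carrier x := ⨆ n, ker (θ.app x ^ n)
  map_le f := map_iSup_ker_pow_le (θ.natural f).symm

variable (θ : Hom M M) (x : C) [FiniteDimensional k (M.V x)]

theorem eventually_eventualRange_eq :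
    ∀ᶠ n in atTop, θ.eventualRange.carrier x = range (θ.app x ^ n) :=
  eventually_iInf_range_pow_eq (θ.app x)

theorem eventually_eventualKer_eq :
    ∀ᶠ n in atTop, θ.eventualKer.carrier x = ker (θ.app x ^ n) :=
  eventually_iSup_ker_pow_eq (θ.app x)

theorem isCompl_eventualRange_eventualKer :
    IsCompl (θ.eventualRange.carrier x) (θ.eventualKer.carrier x) :=
  (isCompl_iSup_ker_pow_iInf_range_pow (θ.app x)).symm

theorem map_eventualRange_eq_self :
    (θ.eventualRange.carrier x).map (θ.app x) = θ.eventualRange.carrier x :=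
  map_iInf_range_pow_eq_self (θ.app x)

theorem disjoint_eventualRange_ker : Disjoint (θ.eventualRange.carrier x) (ker (θ.app x)) :=
  disjoint_iInf_range_pow_ker (θ.app x)

theorem exists_eventualKer_le_ker_pow : ∃ n : ℕ, θ.eventualKer.carrier x ≤ ker (θ.app x ^ n) :=
  (θ.eventually_eventualKer_eq x).exists.imp fun _ ↦ le_of_eq

end Hom

end PModCat

theorem stmt9 {k : Type} [Field k] {C : Type} [CategoryTheory.SmallCategory C]
    (M : PModCat.PersistenceModule k C)
    (hfd : ∀ x, FiniteDimensional k (M.V x))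
    (θ : PModCat.Hom M M) :
    ∃ M' M'' : ∀ x : C, Submodule k (M.V x),
      (∀ (x y : C) (f : x ⟶ y), (M' x).map (M.map f) ≤ M' y) ∧
      (∀ (x y : C) (f : x ⟶ y), (M'' x).map (M.map f) ≤ M'' y) ∧
      (∀ x, IsCompl (M' x) (M'' x)) ∧
      (∀ x, ∃ N : ℕ, ∀ n ≥ N,
        M' x = LinearMap.range ((θ.app x : M.V x →ₗ[k] M.V x) ^ n) ∧
        M'' x = LinearMap.ker ((θ.app x : M.V x →ₗ[k] M.V x) ^ n)) ∧
      (∀ x, (M' x).map (θ.app x) = M' x) ∧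
      (∀ x, ∀ m ∈ M' x, θ.app x m = 0 → m = 0) ∧
      (∀ x, ∃ n : ℕ, ∀ m ∈ M'' x, ((θ.app x : M.V x →ₗ[k] M.V x) ^ n) m = 0) := by
  refine ⟨θ.eventualRange.carrier, θ.eventualKer.carrier,
    fun _ _ ↦ θ.eventualRange.map_le, fun _ _ ↦ θ.eventualKer.map_le,
    fun x ↦ θ.isCompl_eventualRange_eventualKer x, fun x ↦ ?stabilization,
    fun x ↦ θ.map_eventualRange_eq_self x, fun x ↦ ?injective,
    fun x ↦ θ.exists_eventualKer_le_ker_pow x⟩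
  case stabilization =>
    exact Filter.eventually_atTop.mp
      ((θ.eventually_eventualRange_eq x).and (θ.eventually_eventualKer_eq x))
  case injective => exact LinearMap.disjoint_ker.mp (θ.disjoint_eventualRange_ker x)
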